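/- Let M be a C-minimal structure, F = {f_u : u ∈ U} a nice family of functions with domain V and absorbing element e, and g : V → V a definable function with g(e) = e. Let u,u',v,v' be elements of U such that v ∈ Γ_{g,u} and v' ∈ Γ_{g,u'}. If v is not an element of Γ_{g,u'}, then v' is an element of Γ_{g,u}. -/

import Mathlib

open FirstOrder Set

universe u

namespace CMinPaper

variable {M : Type u}

/-- The axioms of a (dense) C-relation. -/
def IsCRelation (C : M → M → M → Prop) : Prop :=
  (∀ x y z, C x y z → C x z y) ∧
  (∀ x y z, C x y z → ¬ C y x z) ∧
  (∀ x y z w, C x y z → C x w z ∨ C w y z) ∧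
  (∀ x y, x ≠ y → ∃ z, z ≠ y ∧ C x y z)

/-- A cone (open ball). -/
def IsCone (C : M → M → M → Prop) (s : Set M) : Prop :=
  ∃ a b : M, a ≠ b ∧ s = {x | C a x b}

/-- A 0-level set (closed ball). -/
def IsClosedBall (C : M → M → M → Prop) (s : Set M) : Prop :=
  ∃ a b : M, s = {x | ¬ C x a b}

/-- A ball is a cone or a closed ball. -/
def IsBall (C : M → M → M → Prop) (s : Set M) : Prop :=
  IsCone C s ∨ IsClosedBall C s

/-- The node `a ∧ b` of the underlying tree, viewed as the closed ball
`{z | ¬ C z a b}` of `M` it determines. -/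
def node (C : M → M → M → Prop) (a b : M) : Set M := {x | ¬ C x a b}

/-- `Δ(x,y,z)`. -/
def Delta (C : M → M → M → Prop) (x y z : M) : Prop := ¬ C x y z ∧ ¬ C y x z

/-- The (unary) sets which are definable by a quantifier-free formula with
parameters using only `C` and equality.  A term is either the variable
(`Option.none`) or a parameter (`Option.some a`). -/
inductive QFDef (C : M → M → M → Prop) : Set M → Prop
  | atomC (t₁ t₂ t₃ : Option M) :
      QFDef C {x | C (t₁.getD x) (t₂.getD x) (t₃.getD x)}
  | atomEq (t₁ t₂ : Option M) : QFDef C {x | t₁.getD x = t₂.getD x}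
  | compl {s : Set M} : QFDef C s → QFDef C sᶜ
  | union {s t : Set M} : QFDef C s → QFDef C t → QFDef C (s ∪ t)

/-- The ternary relation interpreting the symbol `r`. -/
def interpC (L : FirstOrder.Language.{u, u}) (M : Type u) [L.Structure M]
    (r : L.Relations 3) : M → M → M → Prop :=
  fun a b c => Language.Structure.RelMap r ![a, b, c]

/-- `M` is C-minimal: in every elementarily equivalent structure, every
definable (with parameters) subset is quantifier-free definable using only
`C` and `=`. -/
def CMinimal (L : FirstOrder.Language.{u, u}) (M : Type u) [L.Structure M]
    (r : L.Relations 3) : Prop :=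
  ∀ (N : Type u) (SN : L.Structure N),
    letI := SN
    L.ElementarilyEquivalent M N →
      ∀ s : Set N, Set.Definable₁ (univ : Set N) L s → QFDef (interpC L N r) s

/-- The (model-theoretic) algebraic closure of a set of parameters. -/
def acl (L : FirstOrder.Language.{u, u}) (M : Type u) [L.Structure M] (A : Set M) : Set M :=
  {a | ∃ s : Set M, Set.Definable₁ A L s ∧ s.Finite ∧ a ∈ s}

/-- The Steinitz exchange property for the algebraic closure. -/
def HasExchange (L : FirstOrder.Language.{u, u}) (M : Type u) [L.Structure M] : Prop :=
  ∀ (A : Set M) (a b : M),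
    a ∈ acl L M (A ∪ {b}) → a ∉ acl L M A → b ∈ acl L M (A ∪ {a})

/-- `M` is geometric: acl has the exchange property in every elementarily
equivalent structure. -/
def Geometric (L : FirstOrder.Language.{u, u}) (M : Type u) [L.Structure M] : Prop :=
  ∀ (N : Type u) (SN : L.Structure N),
    letI := SN
    L.ElementarilyEquivalent M N → HasExchange L N

/-- `M` is trivial: in every elementarily equivalent structure the pregeometry
given by acl is trivial. -/
def TrivialGeometry (L : FirstOrder.Language.{u, u}) (M : Type u) [L.Structure M] : Prop :=
  ∀ (N : Type u) (SN : L.Structure N),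
    letI := SN
    L.ElementarilyEquivalent M N →
      ∀ A : Set N, acl L N A = ⋃ a ∈ A, acl L N {a}

/-- `M` is definably maximal: every definable family of cones which is linearly
ordered by inclusion has a non-empty intersection. -/
def DefinablyMaximal (L : FirstOrder.Language.{u, u}) (M : Type u) [L.Structure M]
    (r : L.Relations 3) : Prop :=
  ∀ (n : ℕ) (S : Set (Fin (n + 1) → M)) (P : Set (Fin n → M)),
    Set.Definable (univ : Set M) L S →
    (∀ p ∈ P, IsCone (interpC L M r) {x | Fin.snoc p x ∈ S}) →
    (∀ p ∈ P, ∀ q ∈ P,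
      {x | Fin.snoc p x ∈ S} ⊆ {x | Fin.snoc q x ∈ S} ∨
        {x | Fin.snoc q x ∈ S} ⊆ {x | Fin.snoc p x ∈ S}) →
    P.Nonempty → (⋂ p ∈ P, {x | Fin.snoc p x ∈ S}).Nonempty

/-- Leaves of the underlying tree are the singletons. -/
def IsLeafSet (s : Set M) : Prop := ∃ x : M, s = {x}

/-- The interval `(lo, hi)` of the branch `br c`, consisting of all nodes
(coded as the closed balls they determine) strictly between the endpoints.
`lo = none` denotes `-∞`; `lo = some p` denotes the node `c ∧ p`; `hi : M`
denotes the node `c ∧ hi` (the leaf `c` when `hi = c`).  The tree ordering is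
reverse inclusion of balls. -/
def branchInterval (C : M → M → M → Prop) (c : M) (lo : Option M) (hi : M) :
    Set (Set M) :=
  {B | (∃ s, B = node C c s) ∧ ¬ IsLeafSet B ∧
    (∀ p ∈ lo, B ⊂ node C c p) ∧ node C c hi ⊂ B}

/-- `I` is an interval of the branch `br c`. -/
def IsIntervalOn (C : M → M → M → Prop) (c : M) (I : Set (Set M)) : Prop :=
  ∃ (lo : Option M) (hi : M), I = branchInterval C c lo hi

/-- `I` is a bounded interval of `br c` (bounded from below and from above). -/
def IsBoundedInterval (C : M → M → M → Prop) (c : M) (I : Set (Set M)) : Prop :=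
  ∃ p hi : M, I = branchInterval C c (some p) hi ∧ ¬ IsLeafSet (node C c hi)

/-- `I` is an unbounded (i.e. not bounded) interval of `br c`. -/
def IsUnboundedInterval (C : M → M → M → Prop) (c : M) (I : Set (Set M)) :
    Prop :=
  IsIntervalOn C c I ∧ ¬ IsBoundedInterval C c I

/-- The relation on nodes coded by `S ⊆ M²` via `(s,t) ↦ (c ∧ s, d ∧ t)`. -/
def codedRel (C : M → M → M → Prop) (S : Set (Fin 2 → M)) (c d : M)
    (B B' : Set M) : Prop :=
  ∃ s t : M, ![s, t] ∈ S ∧ B = node C c s ∧ B' = node C d t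

/-- `S ⊆ M²` codes a bijection between the set `I` of nodes of `br c` and the
set `J` of nodes of `br d`. -/
def CodesBijectionBetween (C : M → M → M → Prop) (S : Set (Fin 2 → M))
    (c d : M) (I J : Set (Set M)) : Prop :=
  (∀ B B', codedRel C S c d B B' → B ∈ I ∧ B' ∈ J) ∧
  (∀ B ∈ I, ∃! B', B' ∈ J ∧ codedRel C S c d B B') ∧
  (∀ B' ∈ J, ∃! B, B ∈ I ∧ codedRel C S c d B B')

/-- Condition (NB): there is no definable bijection between a bounded interval
and an unbounded interval of branches of the underlying tree. -/
def NB (L : FirstOrder.Language.{u, u}) (M : Type u) [L.Structure M] (r : L.Relations 3) :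
    Prop :=
  ∀ (c d : M) (S : Set (Fin 2 → M)), Set.Definable (univ : Set M) L S →
    ∀ I J : Set (Set M),
      IsBoundedInterval (interpC L M r) c I →
      IsUnboundedInterval (interpC L M r) d J →
      ¬ CodesBijectionBetween (interpC L M r) S c d I J

/-- An infinite group definable in `M`: an infinite definable `G ⊆ Mⁿ`
together with a definable subset of `M^{3n}` which is the graph of a group
operation on `G`. -/
def DefinableInfiniteGroup (L : FirstOrder.Language.{u, u}) (M : Type u)
    [L.Structure M] : Prop :=
  ∃ (n : ℕ) (G : Set (Fin n → M)) (mul : (Fin n → M) → (Fin n → M) → Fin n → M)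
    (one : Fin n → M) (inv : (Fin n → M) → Fin n → M),
    Set.Definable (univ : Set M) L G ∧ G.Infinite ∧
    Set.Definable (univ : Set M) L
      {t : (Fin n ⊕ (Fin n ⊕ Fin n)) → M |
        t ∘ Sum.inl ∈ G ∧ t ∘ Sum.inr ∘ Sum.inl ∈ G ∧
          mul (t ∘ Sum.inl) (t ∘ Sum.inr ∘ Sum.inl) = t ∘ Sum.inr ∘ Sum.inr} ∧
    one ∈ G ∧ (∀ a ∈ G, ∀ b ∈ G, mul a b ∈ G) ∧
    (∀ a ∈ G, ∀ b ∈ G, ∀ c ∈ G, mul (mul a b) c = mul a (mul b c)) ∧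
    (∀ a ∈ G, mul one a = a ∧ mul a one = a) ∧
    (∀ a ∈ G, inv a ∈ G ∧ mul a (inv a) = one ∧ mul (inv a) a = one)

/-- `g` is a C-isomorphism from `A` onto `B`. -/
def CIsoOn (C : M → M → M → Prop) (A B : Set M) (g : M → M) : Prop :=
  Set.BijOn g A B ∧ ∀ x ∈ A, ∀ y ∈ A, ∀ z ∈ A, (C x y z ↔ C (g x) (g y) (g z))

/-- The relation `C_e(f,g,h)`. -/
def CeRel (C : M → M → M → Prop) (V : Set M) (e : M) (f g h : M → M) : Prop :=
  ∃ W : Set M, IsCone C W ∧ e ∈ W ∧ W ⊆ V ∧ ∀ x ∈ W \ {e}, C (f x) (g x) (h x)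

/-- The relation `(¬C)_e(f,g,h)`. -/
def NCeRel (C : M → M → M → Prop) (V : Set M) (e : M) (f g h : M → M) : Prop :=
  ∃ W : Set M, IsCone C W ∧ e ∈ W ∧ W ⊆ V ∧ ∀ x ∈ W \ {e}, ¬ C (f x) (g x) (h x)

/-- A function is definable on `V` if its graph over `V` is definable. -/
def DefinableFunOn (L : FirstOrder.Language.{u, u}) (M : Type u) [L.Structure M]
    (V : Set M) (g : M → M) : Prop :=
  Set.Definable (univ : Set M) L {t : Fin 2 → M | t 0 ∈ V ∧ g (t 0) = t 1}

/-- A nice family of functions `{f u : u ∈ U}` on the cone `V`, with absorbing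
element `e`. -/
structure NiceFamily (L : FirstOrder.Language.{u, u}) (M : Type u) [L.Structure M]
    (C : M → M → M → Prop) where
  U : Set M
  V : Set M
  e : M
  f : M → M → M
  coneU : IsCone C U
  coneV : IsCone C V
  he : e ∈ V
  definable : Set.Definable (univ : Set M) L
    {t : Fin 3 → M | t 0 ∈ U ∧ t 1 ∈ V ∧ f (t 0) (t 1) = t 2}
  auto : ∀ u ∈ U, CIsoOn C V V (f u)
  fixe : ∀ u ∈ U, f u e = e
  star : ∀ x ∈ V \ {e}, ∃ V' : Set M, V' ⊆ V ∧ IsCone C V' ∧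
    CIsoOn C U V' fun u => f u x

namespace NiceFamily

variable {L : FirstOrder.Language.{u, u}} [L.Structure M] {C : M → M → M → Prop}

/-- `f u` is tangent to `g` relatively to the family. -/
def Tangent (F : NiceFamily L M C) (u : M) (g : M → M) : Prop :=
  u ∈ F.U ∧ ∀ u' ∈ F.U, NCeRel C F.V F.e (F.f u) (F.f u') g

/-- The set `T_g` of indices of tangents to `g`. -/
def Tset (F : NiceFamily L M C) (g : M → M) : Set M := {u | F.Tangent u g}

/-- The set `Γ_{g,u}`. -/
def Gamma (F : NiceFamily L M C) (g : M → M) (u : M) : Set M :=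
  {y | y ∈ F.U ∧ CeRel C F.V F.e (F.f u) (F.f y) g}

/-- `g` is derivable relatively to the family: it has exactly one tangent. -/
def Derivable (F : NiceFamily L M C) (g : M → M) : Prop := ∃! u, F.Tangent u g

/-- `f u` is non-dilating. -/
def NonDilating (F : NiceFamily L M C) (u : M) : Prop :=
  NCeRel C F.V F.e (fun x => F.f u (F.f u x)) (F.f u) id

/-- `u₀` is an identity element for the family. -/
def HasIdentity (F : NiceFamily L M C) (u₀ : M) : Prop :=
  u₀ ∈ F.U ∧ ∀ x ∈ F.V, F.f u₀ x = x

end NiceFamily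

/-- Continuity on `A` with respect to the topology generated by the cones. -/
def ContinuousOnCones (C : M → M → M → Prop) (A : Set M) (g : M → M) : Prop :=
  ∀ x ∈ A, ∀ W : Set M, IsCone C W → g x ∈ W →
    ∃ W' : Set M, IsCone C W' ∧ x ∈ W' ∧ ∀ y ∈ W' ∩ A, g y ∈ W

/-!
Evaluating a nice family at any single `x ∈ V \ {e}` preserves and reflects `C` on indices, so a
relation `C u v v'` can be read off at one point and then holds along the whole family. Near `e`
the cones `{z | C (f_u x) z (g x)}` and `{z | C (f_u' x) z (g x)}` both contain `g x`, so they are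
comparable. Since `v ∉ Γ_{g,u'}`, at some `x` near `e` the first contains `f_v x` and the second
does not; hence the first also contains `f_v' x`, which gives `C u v v'`. Back near `e`,
`C_e(f_u, f_v, f_v')` and `C_e(f_u, f_v, g)` give `C_e(f_u, f_v', g)`.
-/

section CRelation

variable {C : M → M → M → Prop}

theorem IsCRelation.symm (hC : IsCRelation C) {a b c : M} (h : C a b c) : C a c b :=
  hC.1 a b c h

theorem IsCRelation.asymm (hC : IsCRelation C) {a b c : M} (h : C a b c) : ¬ C b a c :=
  hC.2.1 a b c h

theorem IsCRelation.rel_or_rel (hC : IsCRelation C) {a b c : M} (h : C a b c) (d : M) :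
    C a d c ∨ C d b c :=
  hC.2.2.1 a b c d h

theorem IsCRelation.trans (hC : IsCRelation C) {a b c d : M} (hbc : C a b c) (hcd : C a c d) :
    C a b d := by
  rcases hC.rel_or_rel hcd b with habd | hbcd
  · exact habd
  · have hndcb : ¬ C d c b := fun hdcb => hC.asymm (hC.symm hbcd) (hC.symm hdcb)
    exact hC.symm ((hC.rel_or_rel (hC.symm hbc) d).resolve_right hndcb)

/-- The cones around `d` avoiding `a` and `a'` are comparable; the second omits `b`, so it lies
inside the first, which therefore also contains `b'`. -/
theorem IsCRelation.rel_of_not_rel (hC : IsCRelation C) {a a' b b' d : M} (h : C a b d)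
    (h' : C a' b' d) (hnot : ¬ C a' b d) : C a b b' := by
  have hbb'd : C b b' d := (hC.rel_or_rel h' b).resolve_left hnot
  have hnb'db : ¬ C b' d b := fun hb'db => hC.asymm hbb'd (hC.symm hb'db)
  exact hC.symm ((hC.rel_or_rel (hC.symm h) b').resolve_right hnb'db)

theorem IsCone.subset_or_subset (hC : IsCRelation C) {s t : Set M} (hs : IsCone C s)
    (ht : IsCone C t) (hst : (s ∩ t).Nonempty) : s ⊆ t ∨ t ⊆ s := by
  obtain ⟨a, b, -, rfl⟩ := hs
  obtain ⟨a', b', -, rfl⟩ := ht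
  obtain ⟨e, hes, het⟩ := hst
  by_contra! h
  obtain ⟨x, hxs, hxt⟩ := not_subset.mp h.1
  obtain ⟨y, hyt, hys⟩ := not_subset.mp h.2
  have hxe : C a x e := hC.trans hxs (hC.symm hes)
  have hye : C a' y e := hC.trans hyt (hC.symm het)
  have hnxe : ¬ C a' x e := fun hxe' => hxt (hC.trans hxe' het)
  have hxy : C a x y := hC.rel_of_not_rel hxe hye hnxe
  exact hys (hC.trans (hC.symm hxy) hxs)

theorem IsCone.inter (hC : IsCRelation C) {s t : Set M} (hs : IsCone C s) (ht : IsCone C t)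
    (hst : (s ∩ t).Nonempty) : IsCone C (s ∩ t) := by
  rcases hs.subset_or_subset hC ht hst with h | h
  · rwa [inter_eq_self_of_subset_left h]
  · rwa [inter_eq_self_of_subset_right h]

end CRelation

section Germs

variable {C : M → M → M → Prop} {V : Set M} {e : M} {f f' g g' h k : M → M}

theorem CeRel.symm (hC : IsCRelation C) (hfgh : CeRel C V e f g h) : CeRel C V e f h g := by
  obtain ⟨W, hW, heW, hWV, hfgh⟩ := hfgh
  exact ⟨W, hW, heW, hWV, fun x hx => hC.symm (hfgh x hx)⟩

theorem CeRel.trans (hC : IsCRelation C) (hgh : CeRel C V e f g h) (hhk : CeRel C V e f h k) :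
    CeRel C V e f g k := by
  obtain ⟨W, hW, heW, hWV, hgh⟩ := hgh
  obtain ⟨W', hW', heW', -, hhk⟩ := hhk
  exact ⟨W ∩ W', hW.inter hC hW' ⟨e, heW, heW'⟩, ⟨heW, heW'⟩, inter_subset_left.trans hWV,
    fun x hx => hC.trans (hgh x ⟨hx.1.1, hx.2⟩) (hhk x ⟨hx.1.2, hx.2⟩)⟩

theorem CeRel.exists_rel_of_not_ceRel (hC : IsCRelation C) (hfgk : CeRel C V e f g k)
    (hf'g'k : CeRel C V e f' g' k) (hnot : ¬ CeRel C V e f' g k) :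
    ∃ x ∈ V \ {e}, C (f x) (g x) (g' x) := by
  obtain ⟨W, hW, heW, hWV, hfgk⟩ := hfgk
  obtain ⟨W', hW', heW', -, hf'g'k⟩ := hf'g'k
  have hWW'V : W ∩ W' ⊆ V := inter_subset_left.trans hWV
  obtain ⟨x, ⟨hx, hxe⟩, hnotx⟩ : ∃ x ∈ (W ∩ W') \ {e}, ¬ C (f' x) (g x) (k x) := by
    by_contra! hall
    exact hnot ⟨W ∩ W', hW.inter hC hW' ⟨e, heW, heW'⟩, ⟨heW, heW'⟩, hWW'V, hall⟩
  exact ⟨x, ⟨hWW'V hx, hxe⟩,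
    hC.rel_of_not_rel (hfgk x ⟨hx.1, hxe⟩) (hf'g'k x ⟨hx.2, hxe⟩) hnotx⟩

end Germs

section NiceFamily

variable {L : FirstOrder.Language.{u, u}} [L.Structure M] {C : M → M → M → Prop}
  (F : NiceFamily L M C)

theorem NiceFamily.rel_apply_iff {u v w x : M} (hu : u ∈ F.U) (hv : v ∈ F.U) (hw : w ∈ F.U)
    (hx : x ∈ F.V \ {F.e}) : C (F.f u x) (F.f v x) (F.f w x) ↔ C u v w := by
  obtain ⟨_, -, -, -, hiso⟩ := F.star x hx
  exact (hiso u hu v hv w hw).symm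

theorem NiceFamily.ceRel_of_rel {u v w : M} (hu : u ∈ F.U) (hv : v ∈ F.U) (hw : w ∈ F.U)
    (huvw : C u v w) : CeRel C F.V F.e (F.f u) (F.f v) (F.f w) :=
  ⟨F.V, F.coneV, F.he, subset_rfl, fun _ hx => (F.rel_apply_iff hu hv hw hx).2 huvw⟩

theorem statement9_general (hC : IsCRelation C) {g : M → M} {u u' v v' : M} (hu : u ∈ F.U)
    (hv : v ∈ F.Gamma g u) (hv' : v' ∈ F.Gamma g u') (hnot : v ∉ F.Gamma g u') :
    v' ∈ F.Gamma g u := by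
  obtain ⟨hvU, hvg⟩ := hv
  obtain ⟨hv'U, hv'g⟩ := hv'
  have hnotg : ¬ CeRel C F.V F.e (F.f u') (F.f v) g := fun h => hnot ⟨hvU, h⟩
  obtain ⟨x, hx, hfx⟩ := hvg.exists_rel_of_not_ceRel hC hv'g hnotg
  have huvv' : C u v v' := (F.rel_apply_iff hu hvU hv'U hx).1 hfx
  have hf : CeRel C F.V F.e (F.f u) (F.f v) (F.f v') := F.ceRel_of_rel hu hvU hv'U huvv'
  exact ⟨hv'U, (hf.symm hC).trans hC hvg⟩

end NiceFamily

theorem statement9 {L : FirstOrder.Language.{u, u}} {M : Type u} [L.Structure M]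
    (r : L.Relations 3)
    (hC : IsCRelation (interpC L M r))
    (hmin : CMinimal L M r)
    (F : NiceFamily L M (interpC L M r))
    (g : M → M) (hg : DefinableFunOn L M F.V g)
    (hgV : Set.MapsTo g F.V F.V) (hge : g F.e = F.e)
    (u u' v v' : M) (hu : u ∈ F.U) (hu' : u' ∈ F.U)
    (hv : v ∈ F.Gamma g u) (hv' : v' ∈ F.Gamma g u')
    (hnot : v ∉ F.Gamma g u') :
    v' ∈ F.Gamma g u :=
  statement9_general F hC hu hv hv' hnot

end CMinPaper
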